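/- For every λ with 0 ≤ λ ≤ 1/√3 and every two-qubit state ω, the partial transpose of (E_λ⊗E_λ)[ω] is positive semidefinite; conversely, if 1/√3 < λ ≤ 1, then the partial transpose of (E_λ⊗E_λ)[P₊] (where P₊ is the projection onto the maximally entangled vector (|00⟩+|11⟩)/√2) has a negative eigenvalue, so (E_λ⊗E_λ)[P₊] is entangled. By the two-qubit Peres–Horodecki criterion this means the qubit depolarizing channel E_λ is 2-locally entanglement-annihilating if and only if λ ≤ 1/√3. -/

import Mathlib

open Matrix
open scoped Kronecker ComplexOrder

/-- A quantum state: a positive semidefinite matrix of unit trace. -/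
def IsState {ι : Type} [Fintype ι] (ρ : Matrix ι ι ℂ) : Prop :=
  ρ.PosSemidef ∧ ρ.trace = 1

/-- Separability of a bipartite state across the `ιA | ιB` cut: a finite convex
combination of Kronecker products of states. -/
def IsSep {ιA ιB : Type} [Fintype ιA] [Fintype ιB]
    (ω : Matrix (ιA × ιB) (ιA × ιB) ℂ) : Prop :=
  ∃ (m : ℕ) (p : Fin m → ℝ) (ξ : Fin m → Matrix ιA ιA ℂ) (ζ : Fin m → Matrix ιB ιB ℂ),
    (∀ j, 0 ≤ p j) ∧ ((∑ j, p j) = 1) ∧ (∀ j, IsState (ξ j)) ∧ (∀ j, IsState (ζ j)) ∧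
    ω = ∑ j, (p j : ℂ) • (ξ j ⊗ₖ ζ j)

/-- The extension `E ⊗ id` of a map `E` by a trivial action on an `n`-dimensional ancilla. -/
def tensorId {ι : Type} (E : Matrix ι ι ℂ → Matrix ι ι ℂ) (n : ℕ)
    (X : Matrix (ι × Fin n) (ι × Fin n) ℂ) : Matrix (ι × Fin n) (ι × Fin n) ℂ :=
  Matrix.of fun p q => E (Matrix.of fun a c => X (a, p.2) (c, q.2)) p.1 q.1

/-- A quantum channel: a linear, trace-preserving, completely positive map. -/
def IsChannel {ι : Type} [Fintype ι] (E : Matrix ι ι ℂ → Matrix ι ι ℂ) : Prop :=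
  (∀ (c : ℂ) (X Y : Matrix ι ι ℂ), E (c • X + Y) = c • E X + E Y) ∧
  (∀ X, (E X).trace = X.trace) ∧
  (∀ (n : ℕ) (X : Matrix (ι × Fin n) (ι × Fin n) ℂ), X.PosSemidef → (tensorId E n X).PosSemidef)

/-- Entanglement-breaking channel: `E ⊗ id` maps every state to a separable state,
for every ancilla dimension `n ≥ 1`. -/
def IsEB {ι : Type} [Fintype ι] (E : Matrix ι ι ℂ → Matrix ι ι ℂ) : Prop :=
  ∀ (n : ℕ), 0 < n → ∀ ω : Matrix (ι × Fin n) (ι × Fin n) ℂ,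
    IsState ω → IsSep (tensorId E n ω)

/-- Entanglement-annihilating channel on a bipartite system: every state is mapped
to a separable state. -/
def IsEA {ιA ιB : Type} [Fintype ιA] [Fintype ιB]
    (E : Matrix (ιA × ιB) (ιA × ιB) ℂ → Matrix (ιA × ιB) (ιA × ιB) ℂ) : Prop :=
  ∀ ω : Matrix (ιA × ιB) (ιA × ιB) ℂ, IsState ω → IsSep (E ω)

/-- The map `F ⊗ id` acting as `F` on the first factor of a bipartite system. -/
def rTensor {ιA ιB : Type} (F : Matrix ιA ιA ℂ → Matrix ιA ιA ℂ)
    (X : Matrix (ιA × ιB) (ιA × ιB) ℂ) : Matrix (ιA × ιB) (ιA × ιB) ℂ :=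
  Matrix.of fun p q => F (Matrix.of fun a c => X (a, p.2) (c, q.2)) p.1 q.1

/-- The map `id ⊗ F` acting as `F` on the second factor of a bipartite system. -/
def lTensor {ιA ιB : Type} (F : Matrix ιB ιB ℂ → Matrix ιB ιB ℂ)
    (X : Matrix (ιA × ιB) (ιA × ιB) ℂ) : Matrix (ιA × ιB) (ιA × ιB) ℂ :=
  Matrix.of fun p q => F (Matrix.of fun b d => X (p.1, b) (q.1, d)) p.2 q.2

/-- The local map `E ⊗ F` on a bipartite system (for linear `E`, `F` this is the
usual tensor product map `(id ⊗ F) ∘ (E ⊗ id)`). -/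
def tensorMap {ιA ιB : Type} (E : Matrix ιA ιA ℂ → Matrix ιA ιA ℂ)
    (F : Matrix ιB ιB ℂ → Matrix ιB ιB ℂ)
    (X : Matrix (ιA × ιB) (ιA × ιB) ℂ) : Matrix (ιA × ιB) (ιA × ιB) ℂ :=
  lTensor F (rTensor E X)

/-- `k`-fold Kronecker product of single-particle matrices. -/
def kronPow {d k : ℕ} (ρ : Fin k → Matrix (Fin d) (Fin d) ℂ) :
    Matrix (Fin k → Fin d) (Fin k → Fin d) ℂ :=
  Matrix.of fun i j => ∏ t, ρ t (i t) (j t)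

/-- Full separability of a `k`-partite state: a finite convex combination of
`k`-fold Kronecker products of single-particle states. -/
def IsFullySep {d k : ℕ} (ω : Matrix (Fin k → Fin d) (Fin k → Fin d) ℂ) : Prop :=
  ∃ (m : ℕ) (p : Fin m → ℝ) (ρ : Fin m → Fin k → Matrix (Fin d) (Fin d) ℂ),
    (∀ j, 0 ≤ p j) ∧ ((∑ j, p j) = 1) ∧ (∀ j t, IsState (ρ j t)) ∧
    ω = ∑ j, (p j : ℂ) • kronPow (ρ j)

/-- The map applying `E` to the `t`-th particle of a `k`-partite system. -/
def applyAt {d k : ℕ} (E : Matrix (Fin d) (Fin d) ℂ → Matrix (Fin d) (Fin d) ℂ) (t : Fin k)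
    (X : Matrix (Fin k → Fin d) (Fin k → Fin d) ℂ) :
    Matrix (Fin k → Fin d) (Fin k → Fin d) ℂ :=
  Matrix.of fun i j =>
    E (Matrix.of fun a b => X (Function.update i t a) (Function.update j t b)) (i t) (j t)

/-- The `k`-fold tensor power `E ⊗ ⋯ ⊗ E` of a single-particle map `E`,
obtained by applying `E` to each of the `k` particles. -/
def tensorPow {d : ℕ} (E : Matrix (Fin d) (Fin d) ℂ → Matrix (Fin d) (Fin d) ℂ) (k : ℕ)
    (X : Matrix (Fin k → Fin d) (Fin k → Fin d) ℂ) :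
    Matrix (Fin k → Fin d) (Fin k → Fin d) ℂ :=
  (List.finRange k).foldr (applyAt E) X

/-- The qubit depolarizing channel `E_λ[X] = λ X + (1-λ) tr(X) I/2`. -/
noncomputable def depol (lam : ℝ) (X : Matrix (Fin 2) (Fin 2) ℂ) : Matrix (Fin 2) (Fin 2) ℂ :=
  (lam : ℂ) • X + ((1 - lam : ℝ) : ℂ) • X.trace • ((2 : ℂ)⁻¹ • (1 : Matrix (Fin 2) (Fin 2) ℂ))

/-- The maximally entangled two-qubit vector `(|00⟩ + |11⟩)/√2`. -/
noncomputable def psiPlus : (Fin 2 × Fin 2) → ℂ :=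
  fun p => if p.1 = p.2 then ((Real.sqrt 2 : ℝ) : ℂ)⁻¹ else 0

/-- The projection onto the maximally entangled two-qubit vector. -/
noncomputable def Pplus : Matrix (Fin 2 × Fin 2) (Fin 2 × Fin 2) ℂ :=
  Matrix.vecMulVec psiPlus (star psiPlus)

/-- Partial transposition on the second qubit of a two-qubit matrix. -/
def ptB (X : Matrix (Fin 2 × Fin 2) (Fin 2 × Fin 2) ℂ) :
    Matrix (Fin 2 × Fin 2) (Fin 2 × Fin 2) ℂ :=
  Matrix.of fun p q => X (p.1, q.2) (q.1, p.2)

/-- Partial transposition on the first factor (qubit 1 versus qubits 2,3). -/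
def pt1 (X : Matrix (Fin 2 × Fin 2 × Fin 2) (Fin 2 × Fin 2 × Fin 2) ℂ) :
    Matrix (Fin 2 × Fin 2 × Fin 2) (Fin 2 × Fin 2 × Fin 2) ℂ :=
  Matrix.of fun p q => X (q.1, p.2) (p.1, q.2)

/-- The three-qubit GHZ vector `(|000⟩ + |111⟩)/√2`. -/
noncomputable def ghzVec : (Fin 2 × Fin 2 × Fin 2) → ℂ :=
  fun p => if p.1 = p.2.1 ∧ p.2.1 = p.2.2 then ((Real.sqrt 2 : ℝ) : ℂ)⁻¹ else 0

/-- The three-qubit GHZ state `|GHZ⟩⟨GHZ|`. -/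
noncomputable def ghzState : Matrix (Fin 2 × Fin 2 × Fin 2) (Fin 2 × Fin 2 × Fin 2) ℂ :=
  Matrix.vecMulVec ghzVec (star ghzVec)

/-!
Every state is a mixture of pure ones, local unitaries bring a pure two-qubit state to its Schmidt
form `a|00⟩ + b|11⟩` with `a² + b² = 1`, and they commute with `E_λ ⊗ E_λ`. In the Pauli basis the
image of the Schmidt form is
`¼ (1⊗1 + λ(a² - b²)(Z⊗1 + 1⊗Z) + λ²(Z⊗Z + 2ab(X⊗X - Y⊗Y)))`,
which is a mixture of products of qubit states with Bloch vectors `(±s, 0, ±λ)` and `(0, ±s, ±λ)`,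
where `s² = 4abλ²`. These vectors lie in the unit ball because `s² + λ² ≤ 3λ² ≤ 1`. For `P₊` the
partial transpose of the image is `¼ (1⊗1 + λ²(X⊗X + Y⊗Y + Z⊗Z))`, which has eigenvalue
`(1 - 3λ²)/4` at the singlet vector.
-/

section LinearAlgebra

variable {𝕜 n : Type*} [RCLike 𝕜] [Fintype n]

theorem exists_orthonormalBasis_norm_smul_eq {E : Type*} [NormedAddCommGroup E]
    [InnerProductSpace 𝕜 E] [FiniteDimensional 𝕜 E] (hcard : Module.finrank 𝕜 E = Fintype.card n)
    {f : n → E} (hf : Pairwise fun i j => inner 𝕜 (f i) (f j) = 0) :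
    ∃ b : OrthonormalBasis n 𝕜 E, ∀ i, (‖f i‖ : 𝕜) • b i = f i := by
  have h_normalized : Orthonormal 𝕜 ({i | f i ≠ 0}.domRestrict fun i => (‖f i‖⁻¹ : 𝕜) • f i) := by
    refine ⟨fun i => norm_smul_inv_norm i.2, fun i j hij => ?_⟩
    simp [inner_smul_left, inner_smul_right, hf (Subtype.coe_injective.ne hij)]
  obtain ⟨b, hb⟩ := h_normalized.exists_orthonormalBasis_extension_of_card_eq hcard
  refine ⟨b, fun i => ?_⟩
  by_cases hi : f i = 0
  · simp [hi]
  · rw [hb i hi, smul_inv_smul₀ (by simpa using hi)]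

theorem exists_unitary_mul_diagonal_mul_star [DecidableEq n] (A : Matrix n n 𝕜) :
    ∃ U ∈ unitaryGroup n 𝕜, ∃ V ∈ unitaryGroup n 𝕜, ∃ s : n → ℝ, (∀ i, 0 ≤ s i) ∧
      A = U * diagonal (fun i => (s i : 𝕜)) * star V := by
  have hA : (Aᴴ * A).IsHermitian := isHermitian_conjTranspose_mul_self A
  set v := hA.eigenvectorBasis
  let f : n → EuclideanSpace 𝕜 n := fun i => WithLp.toLp 2 (A *ᵥ v i)
  have hf : Pairwise fun i j => inner 𝕜 (f i) (f j) = 0 := by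
    intro i j hij
    calc inner 𝕜 (f i) (f j) = star (v i : n → 𝕜) ⬝ᵥ ((Aᴴ * A) *ᵥ v j) := by
          rw [EuclideanSpace.inner_eq_star_dotProduct, dotProduct_comm, star_mulVec,
            ← dotProduct_mulVec, mulVec_mulVec]
      _ = hA.eigenvalues j • inner 𝕜 (v i) (v j) := by
          rw [hA.mulVec_eigenvectorBasis, dotProduct_smul, EuclideanSpace.inner_eq_star_dotProduct,
            dotProduct_comm]
      _ = 0 := by rw [v.orthonormal.2 hij, smul_zero]
  obtain ⟨b, hb⟩ := exists_orthonormalBasis_norm_smul_eq finrank_euclideanSpace hf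
  let U := (EuclideanSpace.basisFun n 𝕜).toBasis.toMatrix b.toBasis
  refine ⟨U, (EuclideanSpace.basisFun n 𝕜).toMatrix_orthonormalBasis_mem_unitary b,
    hA.eigenvectorUnitary, hA.eigenvectorUnitary.2, fun i => ‖f i‖, fun i => norm_nonneg _, ?_⟩
  have h_columns : A * hA.eigenvectorUnitary = U * diagonal (fun i => (‖f i‖ : 𝕜)) := by
    ext i j
    have h_entry : (‖f j‖ : 𝕜) * b j i = (A *ᵥ v j) i := congrArg (fun x => x.ofLp i) (hb j)
    rw [mul_diagonal, mul_comm]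
    exact h_entry.symm
  rw [← h_columns, Matrix.mul_assoc, mem_unitaryGroup_iff.1 hA.eigenvectorUnitary.2, Matrix.mul_one]

theorem posSemidef_of_trace_nonneg_of_det_nonneg {A : Matrix (Fin 2) (Fin 2) 𝕜}
    (hA : A.IsHermitian) (h_trace : 0 ≤ A.trace) (h_det : 0 ≤ A.det) : A.PosSemidef := by
  rw [hA.trace_eq_sum_eigenvalues, Fin.sum_univ_two] at h_trace
  rw [hA.det_eq_prod_eigenvalues, Fin.prod_univ_two] at h_det
  norm_cast at h_trace h_det
  rw [hA.posSemidef_iff_eigenvalues_nonneg, Pi.le_def, Fin.forall_fin_two]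
  constructor <;> simp only [Pi.zero_apply] <;> by_contra! h <;> nlinarith

theorem nonneg_of_mulVec_eq_smul {A : Matrix n n 𝕜} (hA : A.PosSemidef) {v : n → 𝕜}
    (hv : v ≠ 0) {μ : ℝ} (h : A *ᵥ v = (μ : 𝕜) • v) : 0 ≤ μ := by
  have h_quad : 0 ≤ (μ : 𝕜) * (star v ⬝ᵥ v) := by
    rw [← smul_eq_mul, ← dotProduct_smul, ← h]
    exact hA.dotProduct_mulVec_nonneg v
  by_contra! hμ
  exact h_quad.not_gt (mul_neg_of_neg_of_pos (by exact_mod_cast hμ)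
    (dotProduct_star_self_pos_iff.2 hv))

theorem convex_setOf_posSemidef {m : Type*} : Convex ℝ {A : Matrix m m 𝕜 | A.PosSemidef} :=
  fun _ hA _ hB _ _ ha hb _ => (hA.smul ha).add (hB.smul hb)

theorem linearMap_ext_kronecker {R M l m p q : Type*} [CommSemiring R] [AddCommMonoid M]
    [Module R M] [Finite l] [Finite m] [Finite p] [Finite q]
    {f g : Matrix (l × p) (m × q) R →ₗ[R] M} (h : ∀ A B, f (A ⊗ₖ B) = g (A ⊗ₖ B)) : f = g := by
  classical
  refine ext_linearMap R fun i j => LinearMap.ext_ring ?_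
  simpa [single_kronecker_single] using h (single i.1 j.1 1) (single i.2 j.2 1)

theorem trace_unitary_conj {R : Type*} [CommRing R] [StarRing R] [DecidableEq n] {U : Matrix n n R}
    (hU : U ∈ unitaryGroup n R) (X : Matrix n n R) : (U * X * Uᴴ).trace = X.trace := by
  rw [trace_mul_comm, ← Matrix.mul_assoc, ← star_eq_conjTranspose, mem_unitaryGroup_iff'.1 hU,
    Matrix.one_mul]

theorem kronecker_mul_kronecker_mul_conjTranspose {R l m p q : Type*} [CommSemiring R] [StarRing R]
    [Fintype m] [Fintype q] (U : Matrix l m R) (V : Matrix p q R) (A : Matrix m m R)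
    (B : Matrix q q R) :
    (U ⊗ₖ V) * (A ⊗ₖ B) * (U ⊗ₖ V)ᴴ = (U * A * Uᴴ) ⊗ₖ (V * B * Vᴴ) := by
  rw [conjTranspose_kronecker, mul_kronecker_mul, mul_kronecker_mul]

theorem kronecker_neg {R l m p q : Type*} [Mul R] [HasDistribNeg R] (A : Matrix l m R)
    (B : Matrix p q R) : A ⊗ₖ (-B) = -(A ⊗ₖ B) := by
  ext i j
  simp

theorem abs_le_inv_sqrt_iff {c : ℝ} (hc : 0 < c) (x : ℝ) : |x| ≤ (√c)⁻¹ ↔ c * x ^ 2 ≤ 1 := by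
  rw [← Real.sqrt_inv, Real.le_sqrt (abs_nonneg x) (inv_nonneg.2 hc.le), sq_abs,
    ← le_div_iff₀' hc, one_div]

end LinearAlgebra

section States

variable {ι ιA ιB : Type} [Fintype ι] [Fintype ιA] [Fintype ιB]

theorem IsState.mem_of_convex {S : Set (Matrix ι ι ℂ)} (hS : Convex ℝ S)
    (h_pure : ∀ ψ : ι → ℂ, star ψ ⬝ᵥ ψ = 1 → vecMulVec ψ (star ψ) ∈ S) {ω : Matrix ι ι ℂ}
    (hω : IsState ω) : ω ∈ S := by
  classical
  have hH := hω.1.isHermitian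
  let v : ι → ι → ℂ := fun i => hH.eigenvectorBasis i
  have h_spectral : ω = ∑ i, hH.eigenvalues i • vecMulVec (v i) (star (v i)) := by
    conv_lhs => rw [hH.spectral_theorem, Unitary.conjStarAlgAut_apply]
    ext p q
    rw [Matrix.mul_apply, Matrix.sum_apply]
    refine Finset.sum_congr rfl fun i _ => ?_
    simp [v, vecMulVec_apply, mul_left_comm, mul_assoc]
  have h_sum : ∑ i, hH.eigenvalues i = 1 := by
    refine RCLike.ofReal_injective (K := ℂ) ?_
    rw [RCLike.ofReal_sum, ← hH.trace_eq_sum_eigenvalues, hω.2, RCLike.ofReal_one]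
  rw [h_spectral]
  refine hS.sum_mem (fun i _ => hω.1.eigenvalues_nonneg i) h_sum fun i _ => h_pure _ ?_
  rw [dotProduct_comm, ← EuclideanSpace.inner_eq_star_dotProduct]
  simp

theorem isState_vecMulVec_star {ψ : ι → ℂ} (hψ : star ψ ⬝ᵥ ψ = 1) :
    IsState (vecMulVec ψ (star ψ)) :=
  ⟨posSemidef_vecMulVec_self_star ψ, by rw [trace_vecMulVec, dotProduct_comm, hψ]⟩

theorem IsState.unitary_conj [DecidableEq ι] {U ρ : Matrix ι ι ℂ} (hU : U ∈ unitaryGroup ι ℂ)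
    (hρ : IsState ρ) : IsState (U * ρ * Uᴴ) :=
  ⟨hρ.1.mul_mul_conjTranspose_same U, (trace_unitary_conj hU ρ).trans hρ.2⟩

/-- The vector `∑ i, s i |ii⟩` with Schmidt coefficients `s`; it is normalized when
`∑ i, s i ^ 2 = 1`. -/
def schmidtVec [DecidableEq ι] (s : ι → ℝ) : ι × ι → ℂ :=
  vec (diagonal fun i => (s i : ℂ))

theorem star_schmidtVec_dotProduct_schmidtVec [DecidableEq ι] (s : ι → ℝ) :
    star (schmidtVec s) ⬝ᵥ schmidtVec s = ((∑ i, s i ^ 2 : ℝ) : ℂ) := by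
  rw [schmidtVec, star_vec_dotProduct_vec, diagonal_conjTranspose, diagonal_mul_diagonal,
    trace_diagonal]
  simp [sq]

theorem exists_schmidt_decomposition [DecidableEq ι] (ψ : ι × ι → ℂ) :
    ∃ U ∈ unitaryGroup ι ℂ, ∃ V ∈ unitaryGroup ι ℂ, ∃ s : ι → ℝ, (∀ i, 0 ≤ s i) ∧
      ψ = (U ⊗ₖ V) *ᵥ schmidtVec s := by
  obtain ⟨A, rfl⟩ := vec_bijective.surjective ψ
  obtain ⟨V, hV, W, hW, s, hs, hA⟩ := exists_unitary_mul_diagonal_mul_star A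
  refine ⟨(star W)ᵀ, transpose_mem_unitaryGroup_iff.2 (Unitary.star_mem hW), V, hV, s, hs, ?_⟩
  rw [schmidtVec, kronecker_mulVec_vec, transpose_transpose]
  exact congrArg vec hA

theorem setOf_isSep_eq_convexHull :
    {X : Matrix (ιA × ιB) (ιA × ιB) ℂ | IsSep X} =
      convexHull ℝ (Set.image2 (· ⊗ₖ ·) {ξ | IsState ξ} {ζ | IsState ζ}) := by
  ext X
  constructor
  · rintro ⟨m, p, ξ, ζ, hp, hp_sum, hξ, hζ, rfl⟩
    exact mem_convexHull_of_exists_fintype p (fun j => ξ j ⊗ₖ ζ j) hp hp_sum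
      (fun j => Set.mem_image2_of_mem (hξ j) (hζ j)) rfl
  · rw [mem_convexHull_iff_exists_fintype]
    rintro ⟨κ, _, p, X, hp, hp_sum, hX, rfl⟩
    choose ξ hξ ζ hζ hX using hX
    let e := (Fintype.equivFin κ).symm
    refine ⟨Fintype.card κ, p ∘ e, ξ ∘ e, ζ ∘ e, fun j => hp _, ?_, fun j => hξ _, fun j => hζ _,
      ?_⟩
    · rw [← hp_sum]
      exact e.sum_comp p
    · simp only [← hX]
      exact (e.sum_comp fun k => p k • (ξ k ⊗ₖ ζ k)).symm

theorem convex_setOf_isSep : Convex ℝ {X : Matrix (ιA × ιB) (ιA × ιB) ℂ | IsSep X} := by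
  rw [setOf_isSep_eq_convexHull]
  exact convex_convexHull ℝ _

theorem isSep_kronecker {ξ : Matrix ιA ιA ℂ} {ζ : Matrix ιB ιB ℂ} (hξ : IsState ξ)
    (hζ : IsState ζ) : IsSep (ξ ⊗ₖ ζ) :=
  setOf_isSep_eq_convexHull.ge (subset_convexHull ℝ _ (Set.mem_image2_of_mem hξ hζ))

theorem IsSep.mem_of_convex {S : Set (Matrix (ιA × ιB) (ιA × ιB) ℂ)} (hS : Convex ℝ S)
    (h_prod : ∀ ξ ζ, IsState ξ → IsState ζ → ξ ⊗ₖ ζ ∈ S) {X : Matrix (ιA × ιB) (ιA × ιB) ℂ}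
    (hX : IsSep X) : X ∈ S :=
  convexHull_min (Set.image2_subset_iff.2 fun ξ hξ ζ hζ => h_prod ξ ζ hξ hζ) hS
    (setOf_isSep_eq_convexHull.le hX)

theorem IsSep.unitary_conj [DecidableEq ιA] [DecidableEq ιB] {U : Matrix ιA ιA ℂ}
    {V : Matrix ιB ιB ℂ} (hU : U ∈ unitaryGroup ιA ℂ) (hV : V ∈ unitaryGroup ιB ℂ)
    {X : Matrix (ιA × ιB) (ιA × ιB) ℂ} (hX : IsSep X) :
    IsSep ((U ⊗ₖ V) * X * (U ⊗ₖ V)ᴴ) := by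
  let conj := LinearMap.mulLeftRight ℝ (U ⊗ₖ V, (U ⊗ₖ V)ᴴ)
  refine hX.mem_of_convex (convex_setOf_isSep.linear_preimage conj) fun ξ ζ hξ hζ => ?_
  change IsSep ((U ⊗ₖ V) * (ξ ⊗ₖ ζ) * (U ⊗ₖ V)ᴴ)
  rw [kronecker_mul_kronecker_mul_conjTranspose]
  exact isSep_kronecker (hξ.unitary_conj hU) (hζ.unitary_conj hV)

end States

section LocalMaps

variable {ιA ιB : Type}

/-- The local map `tensorMap E F` of linear `E` and `F`, bundled as a linear map. -/
def tensorMapLinear (E : Matrix ιA ιA ℂ →ₗ[ℂ] Matrix ιA ιA ℂ)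
    (F : Matrix ιB ιB ℂ →ₗ[ℂ] Matrix ιB ιB ℂ) :
    Matrix (ιA × ιB) (ιA × ιB) ℂ →ₗ[ℂ] Matrix (ιA × ιB) (ιA × ιB) ℂ where
  toFun := tensorMap E F
  map_add' X Y := by
    have h_first : rTensor E (X + Y) = rTensor E X + rTensor E Y := by
      ext p q
      exact congrFun₂ (map_add E (of fun a c => X (a, p.2) (c, q.2))
        (of fun a c => Y (a, p.2) (c, q.2))) p.1 q.1
    ext p q
    rw [tensorMap, h_first]
    exact congrFun₂ (map_add F (of fun b d => rTensor E X (p.1, b) (q.1, d))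
      (of fun b d => rTensor E Y (p.1, b) (q.1, d))) p.2 q.2
  map_smul' c X := by
    have h_first : rTensor E (c • X) = c • rTensor E X := by
      ext p q
      exact congrFun₂ (map_smul E c (of fun a c => X (a, p.2) (c, q.2))) p.1 q.1
    ext p q
    rw [tensorMap, h_first]
    exact congrFun₂ (map_smul F c (of fun b d => rTensor E X (p.1, b) (q.1, d))) p.2 q.2

theorem tensorMapLinear_kronecker (E : Matrix ιA ιA ℂ →ₗ[ℂ] Matrix ιA ιA ℂ)
    (F : Matrix ιB ιB ℂ →ₗ[ℂ] Matrix ιB ιB ℂ) (A : Matrix ιA ιA ℂ) (B : Matrix ιB ιB ℂ) :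
    tensorMapLinear E F (A ⊗ₖ B) = E A ⊗ₖ F B := by
  have h_first : rTensor E (A ⊗ₖ B) = E A ⊗ₖ B := by
    ext p q
    have h_slice : (of fun a c => (A ⊗ₖ B) (a, p.2) (c, q.2)) = B p.2 q.2 • A := by
      ext a c
      simp [mul_comm]
    rw [rTensor, of_apply, h_slice, map_smul, Matrix.smul_apply, smul_eq_mul, mul_comm,
      kronecker_apply]
  ext p q
  have h_slice : (of fun b d => (E A ⊗ₖ B) (p.1, b) (q.1, d)) = E A p.1 q.1 • B := rfl
  change tensorMap E F (A ⊗ₖ B) p q = _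
  rw [tensorMap, h_first, lTensor, of_apply, h_slice, map_smul, Matrix.smul_apply, smul_eq_mul,
    kronecker_apply]

variable [Fintype ιA] [Fintype ιB]

theorem tensorMapLinear_conj {E : Matrix ιA ιA ℂ →ₗ[ℂ] Matrix ιA ιA ℂ}
    {F : Matrix ιB ιB ℂ →ₗ[ℂ] Matrix ιB ιB ℂ} {U : Matrix ιA ιA ℂ} {V : Matrix ιB ιB ℂ}
    (hE : ∀ X, E (U * X * Uᴴ) = U * E X * Uᴴ) (hF : ∀ X, F (V * X * Vᴴ) = V * F X * Vᴴ)
    (X : Matrix (ιA × ιB) (ιA × ιB) ℂ) :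
    tensorMapLinear E F ((U ⊗ₖ V) * X * (U ⊗ₖ V)ᴴ) =
      (U ⊗ₖ V) * tensorMapLinear E F X * (U ⊗ₖ V)ᴴ := by
  let conj := LinearMap.mulLeftRight ℂ (U ⊗ₖ V, (U ⊗ₖ V)ᴴ)
  have h_comm : tensorMapLinear E F ∘ₗ conj = conj ∘ₗ tensorMapLinear E F :=
    linearMap_ext_kronecker fun A B => by
      simp only [conj, LinearMap.comp_apply, LinearMap.mulLeftRight_apply,
        kronecker_mul_kronecker_mul_conjTranspose, tensorMapLinear_kronecker, hE, hF]
  exact LinearMap.congr_fun h_comm X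

end LocalMaps

section Pauli

/-- The Pauli matrix `σₓ`. -/
def pauliX : Matrix (Fin 2) (Fin 2) ℂ := !![0, 1; 1, 0]

/-- The Pauli matrix `σ_y`. -/
def pauliY : Matrix (Fin 2) (Fin 2) ℂ := !![0, -Complex.I; Complex.I, 0]

/-- The Pauli matrix `σ_z`. -/
def pauliZ : Matrix (Fin 2) (Fin 2) ℂ := !![1, 0; 0, -1]

theorem trace_pauliX : pauliX.trace = 0 := by simp [pauliX, trace_fin_two]

theorem trace_pauliY : pauliY.trace = 0 := by simp [pauliY, trace_fin_two]

theorem trace_pauliZ : pauliZ.trace = 0 := by simp [pauliZ, trace_fin_two]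

theorem transpose_pauliX : pauliXᵀ = pauliX := by
  ext i j; fin_cases i <;> fin_cases j <;> simp [pauliX]

theorem transpose_pauliY : pauliYᵀ = -pauliY := by
  ext i j; fin_cases i <;> fin_cases j <;> simp [pauliY]

theorem transpose_pauliZ : pauliZᵀ = pauliZ := by
  ext i j; fin_cases i <;> fin_cases j <;> simp [pauliZ]

theorem isHermitian_pauliX : pauliX.IsHermitian := by
  ext i j; fin_cases i <;> fin_cases j <;> simp [pauliX]

theorem isHermitian_pauliY : pauliY.IsHermitian := by
  ext i j; fin_cases i <;> fin_cases j <;> simp [pauliY]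

theorem isHermitian_pauliZ : pauliZ.IsHermitian := by
  ext i j; fin_cases i <;> fin_cases j <;> simp [pauliZ]

theorem vec_pauliY_ne_zero : vec pauliY ≠ 0 := fun h => by
  simpa [pauliY] using congrFun h (0, 1)

/-- The qubit matrix with Bloch vector `(x, y, z)`, a state when the vector lies in the
unit ball. -/
noncomputable def bloch (x y z : ℝ) : Matrix (Fin 2) (Fin 2) ℂ :=
  (1 / 2 : ℝ) • (1 + x • pauliX + y • pauliY + z • pauliZ)

theorem bloch_eq (x y z : ℝ) :
    bloch x y z = !![(1 + z : ℂ) / 2, (x - y * Complex.I) / 2;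
      (x + y * Complex.I) / 2, (1 - z) / 2] := by
  ext i j
  fin_cases i <;> fin_cases j <;> simp [bloch, pauliX, pauliY, pauliZ] <;> ring

theorem trace_bloch (x y z : ℝ) : (bloch x y z).trace = 1 := by
  simp [bloch, trace_pauliX, trace_pauliY, trace_pauliZ]

theorem isHermitian_bloch (x y z : ℝ) : (bloch x y z).IsHermitian := by
  have h_smul (c : ℝ) {A : Matrix (Fin 2) (Fin 2) ℂ} (hA : A.IsHermitian) :
      (c • A).IsHermitian := hA.smul (.all c)
  exact h_smul _ (((isHermitian_one.add (h_smul x isHermitian_pauliX)).add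
    (h_smul y isHermitian_pauliY)).add (h_smul z isHermitian_pauliZ))

theorem det_bloch (x y z : ℝ) : (bloch x y z).det = ((1 - (x ^ 2 + y ^ 2 + z ^ 2)) / 4 : ℝ) := by
  rw [bloch_eq, det_fin_two_of]
  push_cast
  linear_combination (y : ℂ) ^ 2 / 4 * Complex.I_sq

theorem isState_bloch {x y z : ℝ} (h : x ^ 2 + y ^ 2 + z ^ 2 ≤ 1) : IsState (bloch x y z) := by
  refine ⟨posSemidef_of_trace_nonneg_of_det_nonneg (isHermitian_bloch x y z) ?_ ?_,
    trace_bloch x y z⟩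
  · rw [trace_bloch]
    exact zero_le_one
  · rw [det_bloch]
    exact Complex.zero_le_real.2 (by linarith)

theorem isSep_bloch_kronecker_bloch_add {s z : ℝ} (h : s ^ 2 + z ^ 2 ≤ 1) :
    IsSep (bloch 0 0 z ⊗ₖ bloch 0 0 z +
      (s ^ 2 / 8) • (pauliX ⊗ₖ pauliX - pauliY ⊗ₖ pauliY)) := by
  have h_mix : bloch 0 0 z ⊗ₖ bloch 0 0 z +
      (s ^ 2 / 8) • (pauliX ⊗ₖ pauliX - pauliY ⊗ₖ pauliY) =
        (1 / 2 : ℝ) • ((1 / 2 : ℝ) • (bloch s 0 z ⊗ₖ bloch s 0 z) +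
          (1 / 2 : ℝ) • (bloch (-s) 0 z ⊗ₖ bloch (-s) 0 z)) +
        (1 / 2 : ℝ) • ((1 / 2 : ℝ) • (bloch 0 s z ⊗ₖ bloch 0 (-s) z) +
          (1 / 2 : ℝ) • (bloch 0 (-s) z ⊗ₖ bloch 0 s z)) := by
    simp only [bloch, smul_kronecker, kronecker_smul, add_kronecker, kronecker_add]
    module
  have h_prod {x y x' y' : ℝ} (hx : x ^ 2 + y ^ 2 = s ^ 2) (hx' : x' ^ 2 + y' ^ 2 = s ^ 2) :
      IsSep (bloch x y z ⊗ₖ bloch x' y' z) :=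
    isSep_kronecker (isState_bloch (by linarith)) (isState_bloch (by linarith))
  have h_midpoint {X Y : Matrix (Fin 2 × Fin 2) (Fin 2 × Fin 2) ℂ} (hX : IsSep X)
      (hY : IsSep Y) : IsSep ((1 / 2 : ℝ) • X + (1 / 2 : ℝ) • Y) :=
    convex_setOf_isSep hX hY (by norm_num) (by norm_num) (by norm_num)
  rw [h_mix]
  exact h_midpoint
    (h_midpoint (h_prod (by ring) (by ring)) (h_prod (by ring) (by ring)))
    (h_midpoint (h_prod (by ring) (by ring)) (h_prod (by ring) (by ring)))

theorem vecMulVec_schmidtVec_fin_two (s : Fin 2 → ℝ) :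
    vecMulVec (schmidtVec s) (star (schmidtVec s)) =
      (1 / 4 : ℝ) • ((s 0 ^ 2 + s 1 ^ 2) • (1 + pauliZ ⊗ₖ pauliZ) +
        (s 0 ^ 2 - s 1 ^ 2) • (pauliZ ⊗ₖ 1 + 1 ⊗ₖ pauliZ) +
        (2 * s 0 * s 1) • (pauliX ⊗ₖ pauliX - pauliY ⊗ₖ pauliY)) := by
  ext ⟨i, j⟩ ⟨k, l⟩
  fin_cases i <;> fin_cases j <;> fin_cases k <;> fin_cases l <;>
    simp [schmidtVec, vecMulVec_apply, pauliX, pauliY, pauliZ, one_apply] <;> ring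

end Pauli

section Depolarizing

/-- The depolarizing channel `depol lam` as a linear map. -/
noncomputable def depolLinear (lam : ℝ) :
    Matrix (Fin 2) (Fin 2) ℂ →ₗ[ℂ] Matrix (Fin 2) (Fin 2) ℂ where
  toFun := depol lam
  map_add' X Y := by
    simp only [depol, trace_add]
    module
  map_smul' c X := by
    simp only [depol, trace_smul, smul_eq_mul, RingHom.id_apply]
    module

theorem depolLinear_one (lam : ℝ) : depolLinear lam 1 = 1 := by
  change depol lam 1 = 1
  simp only [depol, trace_one, Fintype.card_fin]
  push_cast
  module

theorem depolLinear_of_trace_eq_zero (lam : ℝ) {A : Matrix (Fin 2) (Fin 2) ℂ} (hA : A.trace = 0) :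
    depolLinear lam A = lam • A := by
  change depol lam A = _
  rw [depol, hA, zero_smul, smul_zero, add_zero, Complex.coe_smul]

theorem depolLinear_unitary_conj (lam : ℝ) {U : Matrix (Fin 2) (Fin 2) ℂ}
    (hU : U ∈ unitaryGroup (Fin 2) ℂ) (X : Matrix (Fin 2) (Fin 2) ℂ) :
    depolLinear lam (U * X * Uᴴ) = U * depolLinear lam X * Uᴴ := by
  have hU' : U * Uᴴ = 1 := mem_unitaryGroup_iff.1 hU
  change depol lam _ = U * depol lam _ * _
  simp only [depol, trace_unitary_conj hU, Matrix.mul_add, Matrix.add_mul, Matrix.mul_smul,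
    Matrix.smul_mul, Matrix.mul_one, hU']

theorem tensorMapLinear_depolLinear_schmidt (lam : ℝ) {s : Fin 2 → ℝ}
    (hs : s 0 ^ 2 + s 1 ^ 2 = 1) :
    tensorMapLinear (depolLinear lam) (depolLinear lam)
        (vecMulVec (schmidtVec s) (star (schmidtVec s))) =
      (1 / 4 : ℝ) • (1 + (lam * (s 0 ^ 2 - s 1 ^ 2)) • (pauliZ ⊗ₖ 1 + 1 ⊗ₖ pauliZ) +
        lam ^ 2 • (pauliZ ⊗ₖ pauliZ +
          (2 * s 0 * s 1) • (pauliX ⊗ₖ pauliX - pauliY ⊗ₖ pauliY))) := by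
  have h_one : tensorMapLinear (depolLinear lam) (depolLinear lam) 1 = 1 := by
    rw [← one_kronecker_one, tensorMapLinear_kronecker, depolLinear_one]
  simp only [vecMulVec_schmidtVec_fin_two, hs, one_smul, map_add, map_sub,
    LinearMap.map_smul_of_tower, h_one, tensorMapLinear_kronecker, depolLinear_one,
    depolLinear_of_trace_eq_zero lam trace_pauliX, depolLinear_of_trace_eq_zero lam trace_pauliY,
    depolLinear_of_trace_eq_zero lam trace_pauliZ, smul_kronecker, kronecker_smul]
  module

theorem isSep_tensorMapLinear_depolLinear_schmidt {lam : ℝ} (hlam : 3 * lam ^ 2 ≤ 1)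
    {s : Fin 2 → ℝ} (hs_nonneg : ∀ i, 0 ≤ s i) (hs : s 0 ^ 2 + s 1 ^ 2 = 1) :
    IsSep (tensorMapLinear (depolLinear lam) (depolLinear lam)
      (vecMulVec (schmidtVec s) (star (schmidtVec s)))) := by
  obtain ⟨t, ht⟩ : ∃ t : ℝ, t ^ 2 = 4 * (s 0 * s 1) * lam ^ 2 :=
    ⟨_, Real.sq_sqrt (mul_nonneg (mul_nonneg zero_le_four (mul_nonneg (hs_nonneg 0) (hs_nonneg 1)))
      (sq_nonneg lam))⟩
  have h_ball : t ^ 2 + lam ^ 2 ≤ 1 := by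
    nlinarith [mul_nonneg (sq_nonneg (s 0 - s 1)) (sq_nonneg lam)]
  have h_mix : (1 / 4 : ℝ) • ((1 : Matrix (Fin 2 × Fin 2) (Fin 2 × Fin 2) ℂ) +
        (lam * (s 0 ^ 2 - s 1 ^ 2)) • (pauliZ ⊗ₖ 1 + 1 ⊗ₖ pauliZ) +
        lam ^ 2 • (pauliZ ⊗ₖ pauliZ +
          (2 * s 0 * s 1) • (pauliX ⊗ₖ pauliX - pauliY ⊗ₖ pauliY))) =
      s 0 ^ 2 • (bloch 0 0 lam ⊗ₖ bloch 0 0 lam +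
        (t ^ 2 / 8) • (pauliX ⊗ₖ pauliX - pauliY ⊗ₖ pauliY)) +
      s 1 ^ 2 • (bloch 0 0 (-lam) ⊗ₖ bloch 0 0 (-lam) +
        (t ^ 2 / 8) • (pauliX ⊗ₖ pauliX - pauliY ⊗ₖ pauliY)) := by
    simp only [bloch, smul_kronecker, kronecker_smul, add_kronecker, kronecker_add,
      one_kronecker_one, ht, eq_sub_of_add_eq hs]
    module
  rw [tensorMapLinear_depolLinear_schmidt lam hs, h_mix]
  exact convex_setOf_isSep (isSep_bloch_kronecker_bloch_add h_ball)
    (isSep_bloch_kronecker_bloch_add (by rwa [neg_sq])) (sq_nonneg _) (sq_nonneg _) hs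

theorem isSep_tensorMap_depol {lam : ℝ} (hlam : 3 * lam ^ 2 ≤ 1)
    {ω : Matrix (Fin 2 × Fin 2) (Fin 2 × Fin 2) ℂ} (hω : IsState ω) :
    IsSep (tensorMap (depol lam) (depol lam) ω) := by
  let T := tensorMapLinear (depolLinear lam) (depolLinear lam)
  refine hω.mem_of_convex (convex_setOf_isSep.linear_preimage (T.restrictScalars ℝ)) fun ψ hψ => ?_
  change IsSep (T _)
  obtain ⟨U, hU, V, hV, s, hs_nonneg, rfl⟩ := exists_schmidt_decomposition ψ
  have h_unitary : (U ⊗ₖ V)ᴴ * (U ⊗ₖ V) = 1 :=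
    mem_unitaryGroup_iff'.1 (kronecker_mem_unitary hU hV)
  have hs : s 0 ^ 2 + s 1 ^ 2 = 1 := by
    rw [star_mulVec, ← dotProduct_mulVec, mulVec_mulVec, h_unitary, one_mulVec,
      star_schmidtVec_dotProduct_schmidtVec, Fin.sum_univ_two] at hψ
    exact_mod_cast hψ
  have h_conj : vecMulVec ((U ⊗ₖ V) *ᵥ schmidtVec s) (star ((U ⊗ₖ V) *ᵥ schmidtVec s)) =
      (U ⊗ₖ V) * vecMulVec (schmidtVec s) (star (schmidtVec s)) * (U ⊗ₖ V)ᴴ := by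
    rw [star_mulVec, mul_vecMulVec, vecMulVec_mul]
  rw [h_conj, tensorMapLinear_conj (depolLinear_unitary_conj lam hU)
    (depolLinear_unitary_conj lam hV)]
  exact (isSep_tensorMapLinear_depolLinear_schmidt hlam hs_nonneg hs).unitary_conj hU hV

end Depolarizing

section PartialTranspose

theorem isLinearMap_ptB : IsLinearMap ℝ ptB := ⟨fun _ _ => rfl, fun _ _ => rfl⟩

theorem ptB_kronecker (A B : Matrix (Fin 2) (Fin 2) ℂ) : ptB (A ⊗ₖ B) = A ⊗ₖ Bᵀ := rfl

theorem IsSep.posSemidef_ptB {X : Matrix (Fin 2 × Fin 2) (Fin 2 × Fin 2) ℂ} (hX : IsSep X) :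
    (ptB X).PosSemidef :=
  hX.mem_of_convex (S := ptB ⁻¹' {A | A.PosSemidef})
    (convex_setOf_posSemidef.is_linear_preimage isLinearMap_ptB)
    fun _ _ hξ hζ => hξ.1.kronecker hζ.1.transpose

theorem psiPlus_eq_schmidtVec : psiPlus = schmidtVec fun _ => (√2)⁻¹ := by
  ext ⟨i, j⟩
  simp [psiPlus, schmidtVec, diagonal_apply, eq_comm]

theorem isState_Pplus : IsState Pplus := by
  refine isState_vecMulVec_star ?_
  rw [psiPlus_eq_schmidtVec, star_schmidtVec_dotProduct_schmidtVec]
  simp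

theorem ptB_tensorMap_depol_Pplus (lam : ℝ) :
    ptB (tensorMap (depol lam) (depol lam) Pplus) =
      (1 / 4 : ℝ) • (1 + lam ^ 2 •
        (pauliX ⊗ₖ pauliX + pauliY ⊗ₖ pauliY + pauliZ ⊗ₖ pauliZ)) := by
  have h_amplitude : (√2)⁻¹ ^ 2 = (1 / 2 : ℝ) := by norm_num
  have h_image : tensorMap (depol lam) (depol lam) Pplus =
      (1 / 4 : ℝ) • (1 ⊗ₖ 1 + lam ^ 2 •
        (pauliZ ⊗ₖ pauliZ + (pauliX ⊗ₖ pauliX - pauliY ⊗ₖ pauliY))) := by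
    rw [Pplus, psiPlus_eq_schmidtVec]
    refine (tensorMapLinear_depolLinear_schmidt lam (by norm_num)).trans ?_
    rw [one_kronecker_one, sub_self, mul_assoc, ← sq, h_amplitude]
    module
  rw [h_image, isLinearMap_ptB.map_smul, isLinearMap_ptB.map_add, isLinearMap_ptB.map_smul,
    isLinearMap_ptB.map_add, isLinearMap_ptB.map_sub]
  simp only [ptB_kronecker, transpose_one, transpose_pauliX, transpose_pauliY, transpose_pauliZ,
    kronecker_neg]
  rw [one_kronecker_one]
  module

-- `vec pauliY = i(|01⟩ - |10⟩)` is the singlet vector up to normalization.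
theorem ptB_tensorMap_depol_Pplus_mulVec_vec_pauliY (lam : ℝ) :
    ptB (tensorMap (depol lam) (depol lam) Pplus) *ᵥ vec pauliY =
      (((1 - 3 * lam ^ 2) / 4 : ℝ) : ℂ) • vec pauliY := by
  have h_vec {A : Matrix (Fin 2) (Fin 2) ℂ} (hA : A * pauliY * Aᵀ = -pauliY) :
      (A ⊗ₖ A) *ᵥ vec pauliY = -vec pauliY := by
    rw [kronecker_mulVec_vec, hA, vec_neg]
  have hX : pauliX * pauliY * pauliXᵀ = -pauliY := by
    rw [transpose_pauliX]
    simp [pauliX, pauliY]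
  have hY : pauliY * pauliY * pauliYᵀ = -pauliY := by
    rw [transpose_pauliY]
    simp [pauliY]
  have hZ : pauliZ * pauliY * pauliZᵀ = -pauliY := by
    rw [transpose_pauliZ]
    simp [pauliZ, pauliY]
  rw [ptB_tensorMap_depol_Pplus, Complex.coe_smul]
  simp only [smul_mulVec, add_mulVec, one_mulVec, h_vec hX, h_vec hY, h_vec hZ]
  module

end PartialTranspose

theorem stmt_15_general (lam : ℝ) :
    (|lam| ≤ (√3)⁻¹ → ∀ ω : Matrix (Fin 2 × Fin 2) (Fin 2 × Fin 2) ℂ, IsState ω →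
      (ptB (tensorMap (depol lam) (depol lam) ω)).PosSemidef) ∧
    ((√3)⁻¹ < |lam| →
      (∃ (μ : ℝ) (v : (Fin 2 × Fin 2) → ℂ), μ < 0 ∧ v ≠ 0 ∧
        ptB (tensorMap (depol lam) (depol lam) Pplus) *ᵥ v = (μ : ℂ) • v) ∧
      ¬ IsSep (tensorMap (depol lam) (depol lam) Pplus)) ∧
    ((∀ ω : Matrix (Fin 2 × Fin 2) (Fin 2 × Fin 2) ℂ, IsState ω →
      IsSep (tensorMap (depol lam) (depol lam) ω)) ↔ |lam| ≤ (√3)⁻¹) := by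
  have h_threshold := abs_le_inv_sqrt_iff three_pos lam
  have h_sep (h : |lam| ≤ (√3)⁻¹) (ω) (hω : IsState ω) :
      IsSep (tensorMap (depol lam) (depol lam) ω) :=
    isSep_tensorMap_depol (h_threshold.1 h) hω
  have h_eigenvector (h : (√3)⁻¹ < |lam|) : ∃ (μ : ℝ) (v : (Fin 2 × Fin 2) → ℂ), μ < 0 ∧ v ≠ 0 ∧
      ptB (tensorMap (depol lam) (depol lam) Pplus) *ᵥ v = (μ : ℂ) • v := by
    have := lt_of_not_ge (mt h_threshold.2 h.not_ge)
    exact ⟨_, _, by linarith, vec_pauliY_ne_zero,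
      ptB_tensorMap_depol_Pplus_mulVec_vec_pauliY lam⟩
  have h_not_sep (h : (√3)⁻¹ < |lam|) : ¬ IsSep (tensorMap (depol lam) (depol lam) Pplus) := by
    intro h_sep_Pplus
    obtain ⟨μ, v, hμ, hv, h_eigen⟩ := h_eigenvector h
    exact hμ.not_ge (nonneg_of_mulVec_eq_smul h_sep_Pplus.posSemidef_ptB hv h_eigen)
  exact ⟨fun h ω hω => (h_sep h ω hω).posSemidef_ptB, fun h => ⟨h_eigenvector h, h_not_sep h⟩,
    fun h => le_of_not_gt fun h' => h_not_sep h' (h _ isState_Pplus), h_sep⟩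

/-- `(E_λ ⊗ E_λ)[ω]` has positive partial transpose for every two-qubit
state `ω` iff `λ ≤ 1/√3`; for `λ > 1/√3` the partial transpose of `(E_λ ⊗ E_λ)[P₊]` has
a negative eigenvalue and the state is entangled. Hence (by the two-qubit
Peres–Horodecki criterion) `E_λ` is 2-locally entanglement-annihilating iff
`λ ≤ 1/√3`. -/
theorem stmt_15 :
    (∀ lam : ℝ, 0 ≤ lam → lam ≤ (Real.sqrt 3)⁻¹ →
      ∀ ω : Matrix (Fin 2 × Fin 2) (Fin 2 × Fin 2) ℂ, IsState ω →
        (ptB (tensorMap (depol lam) (depol lam) ω)).PosSemidef) ∧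
    (∀ lam : ℝ, (Real.sqrt 3)⁻¹ < lam → lam ≤ 1 →
      (∃ (μ : ℝ) (v : (Fin 2 × Fin 2) → ℂ), μ < 0 ∧ v ≠ 0 ∧
        (ptB (tensorMap (depol lam) (depol lam) Pplus)).mulVec v = (μ : ℂ) • v) ∧
      ¬ IsSep (tensorMap (depol lam) (depol lam) Pplus)) ∧
    (∀ lam : ℝ, 0 ≤ lam → lam ≤ 1 →
      ((∀ ω : Matrix (Fin 2 × Fin 2) (Fin 2 × Fin 2) ℂ, IsState ω →
        IsSep (tensorMap (depol lam) (depol lam) ω)) ↔ lam ≤ (Real.sqrt 3)⁻¹)) :=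
  ⟨fun lam h0 h => (stmt_15_general lam).1 (by rwa [abs_of_nonneg h0]),
    fun lam h _ => (stmt_15_general lam).2.1 (h.trans_le (le_abs_self lam)),
    fun lam h0 _ => by simpa only [abs_of_nonneg h0] using (stmt_15_general lam).2.2⟩
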